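/- Let θ'_1,…,θ'_N be i.i.d. uniform on the circle of circumference 2π, N ≥ 2, and 0 < δ < π/6. Then P(δ) := P{for all i ≠ j the circular included angle θ'_{ij} ≤ π − 2δ} satisfies the upper bound P(δ) ≤ ((π−4δ)/π)^{N−1} + (N−1)·4δ(π−2δ)^{N−2}/(2π)^{N−1}. -/

import Mathlib

open Real MeasureTheory

/-- Uniform probability measure on the interval [0, 2π]. -/
noncomputable def unifAngle : Measure ℝ :=
  (ENNReal.ofReal (1 / (2 * π))) • volume.restrict (Set.Icc 0 (2 * π))

/-!
Put `n = N - 1`. Rotate one of the points to `0`; the others then have coordinates in `[-a, a]`,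
where `a = π - 2δ` and the circle has length `T = 2π`. Either all of these coordinates are
nonpositive, an event of volume at most `a ^ n`, or one of the `n` points has the largest coordinate
`u ∈ [0, a]`. In the latter case every other coordinate lies in `[u - a, u] ∪ [-a, u - (T - a)]`, of
length at most `a + max (u - (T - 2 * a)) 0`. Integrating the `(n - 1)`-st power of this length over
`u`, summing over the `n` choices and dividing by `T ^ n` gives exactly the claimed bound.
-/

open scoped NNReal

section PiMeasure

variable {n : ℕ} {α : Type*} [MeasurableSpace α]

lemma measure_pi_const_smul {ι : Type*} [Fintype ι] (μ : Measure α) [SigmaFinite μ] (c : ℝ≥0) :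
    Measure.pi (fun _ : ι => c • μ) = c ^ Fintype.card ι • Measure.pi fun _ : ι => μ := by
  refine Measure.pi_eq fun s _ => ?_
  simp only [Measure.smul_apply, Measure.pi_pi, ENNReal.smul_def, smul_eq_mul, ENNReal.coe_pow,
    Finset.prod_mul_distrib, Finset.prod_const, Finset.card_univ]

lemma measure_pi_eq_lintegral_insertNth (μ : Measure α) [SigmaFinite μ] (k : Fin (n + 1))
    {S : Set (Fin (n + 1) → α)} (hS : MeasurableSet S) :
    Measure.pi (fun _ => μ) S =
      ∫⁻ x, Measure.pi (fun _ => μ) {y : Fin n → α | k.insertNth x y ∈ S} ∂μ := by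
  have hmp := (measurePreserving_piFinSuccAbove (fun _ : Fin (n + 1) => μ) k).symm
  rw [← hmp.measure_preimage hS.nullMeasurableSet, Measure.prod_apply (hmp.measurable hS)]
  rfl

lemma measure_pi_forall_succAbove_mem_eq_setLIntegral (μ : Measure α) [SigmaFinite μ]
    (k : Fin (n + 1)) {s : Set α} (hs : MeasurableSet s) {R : Set (α × α)} (hR : MeasurableSet R) :
    Measure.pi (fun _ => μ) {p : Fin (n + 1) → α | p k ∈ s ∧ ∀ i, (p k, p (k.succAbove i)) ∈ R} =
      ∫⁻ x in s, μ (Prod.mk x ⁻¹' R) ^ n ∂μ := by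
  have hmeas : MeasurableSet
      {p : Fin (n + 1) → α | p k ∈ s ∧ ∀ i, (p k, p (k.succAbove i)) ∈ R} := by
    refine (measurable_pi_apply k hs).inter
      (.congr (.iInter fun i => ?_) (Set.ofPred_forall _).symm)
    exact hR.preimage (f := fun p : Fin (n + 1) → α => (p k, p (k.succAbove i))) (by fun_prop)
  rw [measure_pi_eq_lintegral_insertNth μ k hmeas, ← lintegral_indicator hs]
  refine lintegral_congr fun x => ?_
  by_cases hx : x ∈ s
  · have hslice : {y : Fin n → α | ∀ i, (x, y i) ∈ R} = Set.univ.pi fun _ => Prod.mk x ⁻¹' R := by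
      ext; simp
    simp [hx, hslice, Measure.pi_pi]
  · simp [hx]

lemma measure_pi_eq_mul_of_add_const_mem_iff {G : Type*} [AddGroup G] [MeasurableSpace G]
    [MeasurableAdd G] (μ : Measure G) [SigmaFinite μ] [μ.IsAddRightInvariant]
    {S : Set (Fin (n + 1) → G)} (hS : MeasurableSet S)
    (hinv : ∀ (t : G) (x : Fin (n + 1) → G), (fun i => x i + t) ∈ S ↔ x ∈ S) :
    Measure.pi (fun _ => μ) S =
      μ Set.univ * Measure.pi (fun _ => μ) {y : Fin n → G | Fin.cons 0 y ∈ S} := by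
  have hslice (t : G) : {y : Fin n → G | Fin.cons t y ∈ S} =
      (fun y => y + fun _ => -t) ⁻¹' {y : Fin n → G | Fin.cons 0 y ∈ S} := by
    ext y
    rw [Set.mem_preimage, Set.mem_ofPred_eq, Set.mem_ofPred_eq, ← hinv (-t)]
    suffices (fun i => (Fin.cons t y : Fin (n + 1) → G) i + -t) =
      Fin.cons 0 (y + fun _ => -t) by rw [this]
    ext i
    cases i using Fin.cases <;> simp
  rw [measure_pi_eq_lintegral_insertNth μ 0 hS, mul_comm, ← lintegral_const]
  refine lintegral_congr fun t => ?_
  simp only [Fin.insertNth_zero']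
  rw [hslice, measure_preimage_add_right]

end PiMeasure

lemma volume_pi_addCircle_eq {ι : Type*} [Fintype ι] {T : ℝ} [Fact (0 < T)] (t : ℝ)
    {S : Set (ι → AddCircle T)} (hS : MeasurableSet S) :
    volume S = volume ({p : ι → ℝ | (fun i => (p i : AddCircle T)) ∈ S} ∩
      Set.univ.pi fun _ => Set.Ioc t (t + T)) := by
  have hmp := measurePreserving_pi (fun _ : ι => volume.restrict (Set.Ioc t (t + T)))
    (fun _ : ι => (volume : Measure (AddCircle T))) fun _ => AddCircle.measurePreserving_mk T t
  rw [← Measure.restrict_pi_pi] at hmp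
  rw [volume_pi, ← hmp.measure_preimage hS.nullMeasurableSet,
    Measure.restrict_apply (hmp.measurable hS), volume_pi]
  rfl

lemma le_or_sub_le_of_norm_coe_le {T a w : ℝ} (hT : 0 < T) (h : ‖(w : AddCircle T)‖ ≤ a) :
    w ≤ a ∨ T - a ≤ w := by
  rw [AddCircle.norm_eq, abs_le] at h
  rcases le_or_gt (round (T⁻¹ * w)) 0 with hr | hr
  · have hr' : (round (T⁻¹ * w) : ℝ) ≤ 0 := by exact_mod_cast hr
    exact .inl (by nlinarith)
  · have hr' : (1 : ℝ) ≤ round (T⁻¹ * w) := by exact_mod_cast hr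
    exact .inr (by nlinarith)

lemma integral_add_max_sub_pow (n : ℕ) {a b c : ℝ} (hc : 0 ≤ c) (hcb : c ≤ b) :
    ∫ u in (0)..b, (a + max (u - c) 0) ^ n =
      c * a ^ n + ((a + (b - c)) ^ (n + 1) - a ^ (n + 1)) / (n + 1) := by
  have hint (x y : ℝ) :
      IntervalIntegrable (fun u => (a + max (u - c) 0) ^ n) volume x y :=
    Continuous.intervalIntegrable (by fun_prop) x y
  have hleft : ∫ u in (0)..c, (a + max (u - c) 0) ^ n = c * a ^ n := by
    rw [intervalIntegral.integral_congr (g := fun _ => a ^ n) fun u hu => ?_]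
    · simp
    · rw [Set.uIcc_of_le hc] at hu
      simp [max_eq_right (sub_nonpos.2 hu.2)]
  have hright : ∫ u in c..b, (a + max (u - c) 0) ^ n =
      ((a + (b - c)) ^ (n + 1) - a ^ (n + 1)) / (n + 1) := by
    rw [intervalIntegral.integral_congr (g := fun u => (u + (a - c)) ^ n) fun u hu => ?_]
    · rw [intervalIntegral.integral_comp_add_right (fun u => u ^ n), integral_pow]
      ring_nf
    · rw [Set.uIcc_of_le hcb] at hu
      simp only [max_eq_left (sub_nonneg.2 hu.1)]
      ring
  rw [← intervalIntegral.integral_add_adjacent_intervals (hint 0 c) (hint c b), hleft, hright]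

/-- The `ι`-tuples of points whose pairwise distances are all at most `r`; on a circle of
circumference `T` this is the event that every included angle is at most `r`. -/
def closeTuples (ι X : Type*) [PseudoMetricSpace X] (r : ℝ) : Set (ι → X) :=
  {x | ∀ i j, dist (x i) (x j) ≤ r}

lemma isClosed_closeTuples (ι X : Type*) [PseudoMetricSpace X] (r : ℝ) :
    IsClosed (closeTuples ι X r) := by
  simp only [closeTuples, Set.ofPred_forall]
  exact isClosed_iInter fun i => isClosed_iInter fun j => isClosed_le (by fun_prop) continuous_const

lemma add_const_mem_closeTuples_iff {ι X : Type*} [SeminormedAddCommGroup X] {r : ℝ} (t : X)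
    (x : ι → X) : (fun i => x i + t) ∈ closeTuples ι X r ↔ x ∈ closeTuples ι X r := by
  simp only [closeTuples, Set.mem_ofPred_eq, dist_add_right]

/-- The `ι`-tuples of coordinates in `[-a, a]` of points on the circle of circumference `T` that are
pairwise at arc distance at most `a`: what is left of `closeTuples` once one further point of the
tuple has been rotated to `0`. -/
def anchoredTuples (ι : Type*) (T a : ℝ) : Set (ι → ℝ) :=
  {p | (∀ i, p i ∈ Set.Icc (-a) a) ∧ ∀ i j, ‖((p i - p j : ℝ) : AddCircle T)‖ ≤ a}

/-- The pairs `(u, y)` for which the coordinate `y` can occur next to a largest coordinate `u` in a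
tuple of `anchoredTuples`: the arc from `y` to `u` of length at most `a` either runs directly, or
around the far side of the circle. -/
def belowMax (T a : ℝ) : Set (ℝ × ℝ) :=
  {q | q.2 ∈ Set.Icc (q.1 - a) q.1 ∪ Set.Icc (-a) (q.1 - (T - a))}

lemma measurableSet_belowMax (T a : ℝ) : MeasurableSet (belowMax T a) := by
  simp only [belowMax, Set.mem_union, Set.mem_Icc, measurableSet_setOfPred]
  measurability

lemma volume_belowMax_slice_le {T a : ℝ} (ha : 0 ≤ a) (u : ℝ) :
    volume (Prod.mk u ⁻¹' belowMax T a) ≤ ENNReal.ofReal (a + max (u - (T - 2 * a)) 0) := by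
  have hslice : Prod.mk u ⁻¹' belowMax T a =
      Set.Icc (u - a) u ∪ Set.Icc (-a) (u - (T - a)) := rfl
  rw [hslice]
  refine (measure_union_le _ _).trans_eq ?_
  rw [Real.volume_Icc, Real.volume_Icc, ENNReal.ofReal_add ha (le_max_right _ _),
    ENNReal.ofReal_max, ENNReal.ofReal_zero, max_zero]
  ring_nf

lemma anchoredTuples_subset {n : ℕ} {T a : ℝ} (hT : 0 < T) :
    anchoredTuples (Fin (n + 1)) T a ⊆ (Set.univ.pi fun _ => Set.Icc (-a) 0) ∪
      ⋃ k, {p | p k ∈ Set.Icc 0 a ∧ ∀ i, (p k, p (k.succAbove i)) ∈ belowMax T a} := by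
  rintro p ⟨hbox, hclose⟩
  obtain ⟨k, hk⟩ := Finite.exists_max p
  rcases le_total (p k) 0 with hneg | hpos
  · exact .inl fun i _ => ⟨(hbox i).1, (hk i).trans hneg⟩
  · refine .inr (Set.mem_iUnion.2 ⟨k, ⟨hpos, (hbox k).2⟩, fun i => ?_⟩)
    rcases le_or_sub_le_of_norm_coe_le hT (hclose k (k.succAbove i)) with hnear | hfar
    · exact .inl ⟨by linarith, hk _⟩
    · exact .inr ⟨(hbox _).1, by linarith⟩

lemma setLIntegral_volume_belowMax_pow_le (n : ℕ) {T a : ℝ} (hTa : T ≤ 3 * a)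
    (haT : 2 * a ≤ T) :
    ∫⁻ u in Set.Icc 0 a, volume (Prod.mk u ⁻¹' belowMax T a) ^ n ≤
      ENNReal.ofReal ((T - 2 * a) * a ^ n + ((4 * a - T) ^ (n + 1) - a ^ (n + 1)) / (n + 1)) := by
  have ha : 0 ≤ a := by linarith
  calc ∫⁻ u in Set.Icc 0 a, volume (Prod.mk u ⁻¹' belowMax T a) ^ n
      ≤ ∫⁻ u in Set.Icc 0 a, ENNReal.ofReal ((a + max (u - (T - 2 * a)) 0) ^ n) := by
        refine lintegral_mono fun u => ?_
        rw [ENNReal.ofReal_pow (by positivity)]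
        gcongr
        exact volume_belowMax_slice_le ha u
    _ = ENNReal.ofReal (∫ u in (0)..a, (a + max (u - (T - 2 * a)) 0) ^ n) := by
        rw [intervalIntegral.integral_of_le ha, ← integral_Icc_eq_integral_Ioc,
          ofReal_integral_eq_lintegral_ofReal]
        · exact (Continuous.continuousOn (by fun_prop)).integrableOn_Icc
        · exact ae_of_all _ fun u => by positivity
    _ = _ := by
        rw [integral_add_max_sub_pow n (by linarith) (by linarith)]
        ring_nf

lemma volume_anchoredTuples_le (n : ℕ) {T a : ℝ} (hT : 0 < T) (hTa : T ≤ 3 * a)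
    (haT : 2 * a ≤ T) :
    volume (anchoredTuples (Fin (n + 1)) T a) ≤
      ENNReal.ofReal ((4 * a - T) ^ (n + 1) + (n + 1) * ((T - 2 * a) * a ^ n)) := by
  have ha : 0 ≤ a := by linarith
  set I := (T - 2 * a) * a ^ n + ((4 * a - T) ^ (n + 1) - a ^ (n + 1)) / (n + 1) with hI
  have hI_nonneg : 0 ≤ I := by
    have hgap : 0 ≤ T - 2 * a := by linarith
    have hpow : 0 ≤ (4 * a - T) ^ (n + 1) - a ^ (n + 1) :=
      sub_nonneg.2 (pow_le_pow_left₀ ha (by linarith) _)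
    exact add_nonneg (mul_nonneg hgap (pow_nonneg ha n)) (div_nonneg hpow n.cast_add_one_pos.le)
  have hbox : volume (Set.univ.pi fun _ : Fin (n + 1) => Set.Icc (-a) 0) =
      ENNReal.ofReal (a ^ (n + 1)) := by
    rw [volume_pi_pi, ENNReal.ofReal_pow ha]
    simp
  have hmax (k : Fin (n + 1)) : volume {p : Fin (n + 1) → ℝ |
      p k ∈ Set.Icc 0 a ∧ ∀ i, (p k, p (k.succAbove i)) ∈ belowMax T a} ≤ ENNReal.ofReal I := by
    rw [volume_pi, measure_pi_forall_succAbove_mem_eq_setLIntegral volume k measurableSet_Icc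
      (measurableSet_belowMax T a)]
    exact setLIntegral_volume_belowMax_pow_le n hTa haT
  calc volume (anchoredTuples (Fin (n + 1)) T a)
      ≤ ENNReal.ofReal (a ^ (n + 1)) + ∑ _k : Fin (n + 1), ENNReal.ofReal I := by
        refine (measure_mono (anchoredTuples_subset hT)).trans
          ((measure_union_le _ _).trans (add_le_add hbox.le ?_))
        exact (measure_iUnion_fintype_le _ _).trans (Finset.sum_le_sum fun k _ => hmax k)
    _ = ENNReal.ofReal (a ^ (n + 1) + ∑ _k : Fin (n + 1), I) := by
        rw [ENNReal.ofReal_add (pow_nonneg ha _) (Finset.sum_nonneg fun _ _ => hI_nonneg),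
          ENNReal.ofReal_sum_of_nonneg fun _ _ => hI_nonneg]
    _ = _ := by
        rw [Finset.sum_const, Finset.card_fin, nsmul_eq_mul, hI]
        congr 1
        push_cast
        field_simp
        ring

lemma cons_zero_mem_closeTuples {n : ℕ} {T a : ℝ} (hT : 0 < T) {p : Fin n → ℝ}
    (hp : (Fin.cons 0 fun i => (p i : AddCircle T)) ∈ closeTuples (Fin (n + 1)) (AddCircle T) a)
    (hbox : ∀ i, |p i| ≤ T / 2) :
    p ∈ anchoredTuples (Fin n) T a := by
  refine ⟨fun i => ?_, fun i j => ?_⟩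
  · have hnorm : ‖(p i : AddCircle T)‖ ≤ a := by simpa using hp i.succ 0
    rw [(AddCircle.norm_coe_eq_abs_iff T hT.ne').2 (by rw [abs_of_pos hT]; exact hbox i)] at hnorm
    exact abs_le.1 hnorm
  · simpa [dist_eq_norm] using hp i.succ j.succ

lemma volume_closeTuples_addCircle_le (n : ℕ) {T a : ℝ} [hT : Fact (0 < T)] (hTa : T ≤ 3 * a)
    (haT : 2 * a ≤ T) :
    volume (closeTuples (Fin (n + 2)) (AddCircle T) a) ≤
      ENNReal.ofReal (T * ((4 * a - T) ^ (n + 1) + (n + 1) * ((T - 2 * a) * a ^ n))) := by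
  have hclosed := isClosed_closeTuples (Fin (n + 2)) (AddCircle T) a
  have hanchored : MeasurableSet {y : Fin (n + 1) → AddCircle T |
      Fin.cons 0 y ∈ closeTuples (Fin (n + 2)) (AddCircle T) a} :=
    (hclosed.preimage (f := fun y => Fin.cons 0 y) (by fun_prop)).measurableSet
  rw [volume_pi, measure_pi_eq_mul_of_add_const_mem_iff volume hclosed.measurableSet
    add_const_mem_closeTuples_iff, AddCircle.measure_univ, ENNReal.ofReal_mul hT.out.le,
    ← volume_pi, volume_pi_addCircle_eq (-(T / 2)) hanchored]
  gcongr
  refine (measure_mono ?_).trans (volume_anchoredTuples_le n hT.out hTa haT)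
  rintro p ⟨hp, hbox⟩
  refine cons_zero_mem_closeTuples hT.out hp fun i => abs_le.2 ?_
  constructor <;> linarith [(hbox i trivial).1, (hbox i trivial).2]

instance fact_two_pi_pos : Fact (0 < 2 * π) := ⟨two_pi_pos⟩

lemma measurePreserving_coe_unifAngle :
    MeasurePreserving ((↑) : ℝ → AddCircle (2 * π)) unifAngle
      ((1 / (2 * π)).toNNReal • volume) := by
  have hmk := AddCircle.measurePreserving_mk (2 * π) 0
  rw [zero_add, Measure.restrict_congr_set Ioc_ae_eq_Icc] at hmk
  exact hmk.smul_measure (1 / (2 * π)).toNNReal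

lemma pi_unifAngle_preimage_coe {ι : Type*} [Fintype ι] {S : Set (ι → AddCircle (2 * π))}
    (hS : MeasurableSet S) :
    Measure.pi (fun _ => unifAngle) ((fun (θ : ι → ℝ) i => (θ i : AddCircle (2 * π))) ⁻¹' S) =
      ENNReal.ofReal (1 / (2 * π)) ^ Fintype.card ι * volume S := by
  have hmp := measurePreserving_pi (fun _ : ι => unifAngle) _
    fun _ => measurePreserving_coe_unifAngle
  rw [hmp.measure_preimage hS.nullMeasurableSet, measure_pi_const_smul, volume_pi,
    Measure.smul_apply, ENNReal.smul_def, ENNReal.coe_pow, smul_eq_mul, ENNReal.ofReal]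

lemma setOf_norm_le_eq_preimage_closeTuples {ι : Type*} {T a : ℝ} (ha : 0 ≤ a) :
    {θ : ι → ℝ | ∀ i j, i ≠ j → ‖((θ i - θ j : ℝ) : AddCircle T)‖ ≤ a} =
      (fun θ i => (θ i : AddCircle T)) ⁻¹' closeTuples ι (AddCircle T) a := by
  ext θ
  refine forall₂_congr fun i j => ?_
  rw [dist_eq_norm, ← AddCircle.coe_sub]
  refine ⟨fun h => ?_, fun h _ => h⟩
  rcases eq_or_ne i j with rfl | hij
  · simpa using ha
  · exact h hij

/-- For N ≥ 2 i.i.d. points uniform on the circle of circumference 2π and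
0 < δ < π/6, the probability P(δ) that every pairwise circular included angle
(shorter arc distance) is at most π − 2δ is bounded above by
((π−4δ)/π)^{N−1} + (N−1)·4δ(π−2δ)^{N−2}/(2π)^{N−1}. -/
theorem stmt_9 (N : ℕ) (hN : 2 ≤ N) (δ : ℝ) (hδ1 : 0 < δ) (hδ2 : δ < π / 6) :
    ((Measure.pi fun _ : Fin N => unifAngle)
      {θ : Fin N → ℝ | ∀ i j, i ≠ j →
        ‖((θ i - θ j : ℝ) : AddCircle (2 * π))‖ ≤ π - 2 * δ}).toReal
    ≤ ((π - 4 * δ) / π) ^ (N - 1) + ((N : ℝ) - 1) * (4 * δ * (π - 2 * δ) ^ (N - 2)) / (2 * π) ^ (N - 1) := by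
  obtain ⟨n, rfl⟩ := Nat.exists_eq_add_of_le' hN
  have hclose : 0 ≤ π - 2 * δ := by linarith
  have hfree : 0 ≤ π - 4 * δ := by linarith
  have hvol := volume_closeTuples_addCircle_le n (T := 2 * π) (a := π - 2 * δ)
    (by linarith) (by linarith)
  rw [show 4 * (π - 2 * δ) - 2 * π = 2 * (π - 4 * δ) by ring,
    show 2 * π - 2 * (π - 2 * δ) = 4 * δ by ring] at hvol
  calc _ ≤ (1 / (2 * π)) ^ (n + 2) * (2 * π * ((2 * (π - 4 * δ)) ^ (n + 1) +
        (n + 1) * (4 * δ * (π - 2 * δ) ^ n))) := by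
        refine ENNReal.toReal_le_of_le_ofReal (by positivity) ?_
        rw [setOf_norm_le_eq_preimage_closeTuples hclose,
          pi_unifAngle_preimage_coe (isClosed_closeTuples _ _ _).measurableSet, Fintype.card_fin,
          ENNReal.ofReal_mul (by positivity), ENNReal.ofReal_pow (by positivity)]
        gcongr
    _ = _ := by
        rw [show n + 2 - 1 = n + 1 by rfl, Nat.add_sub_cancel]
        push_cast
        simp only [mul_pow, div_pow, one_div, inv_pow, pow_succ]
        field_simp
        ring
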